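/- Let M = (M_k) be a nondecreasing logarithmically convex sequence of positive real numbers with M_0 = 1. Then for every ρ ∈ (0,1) and q ≥ 1 there exists a C^∞ function f : ℝ² → ℝ (namely f(x) = h(x/ρ − (q,0)) for a base function h) such that: (i) for every x ∈ ℝ² and every multi-index α ∈ ℕ², |∂^α f(x)| ≤ 64·ρ²·8^{|α|+1}·α!·M_{α₂}/(‖x − (qρ,0)‖² + ρ²)^{1+|α|/2}; and (ii) for every n ∈ ℕ, |∂^{2n}f/∂x₂^{2n}(qρ,0)| ≥ (2n)!·M_{2n}/(4^n·ρ^{2n}). -/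

import Mathlib

/-!
Put `m k = M (k + 1) / M k`. The building block is
`f x = ∑ k ≥ 0, (M k / (2 m k) ^ k) / (1 + (x₁ / ρ - q)² + (m k x₂ / ρ)²)`,
that is, a rescaled translate of the base function with the term `k = 0` added to its series; this
term gives the lower bound of order `n = 0`.

The derivatives of a single kernel `g = c / Q`, `Q` a quadratic polynomial, are controlled through
Leibniz' rule for `Q g = c` (`kern_leibniz`). Being a recursion of depth two, it yields by induction
`|∂^(i,j) g| ≤ c 8 ^ (i + j) i! j! a ^ i b ^ j / √Q ^ (i + j + 2)` (`kern_bound`) and, at the centre,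
the exact value of the even `x₂`-derivatives (`kern_deriv_center`). Log-convexity of `M` gives
`(M k / m k ^ k) * m k ^ j ≤ M j` (`ratio_pow_le`), so the `k`-th term contributes at most
`2 ^ (-k)` times a fixed bound, and termwise differentiation (`TermwiseSmooth`) gives smoothness and
the upper estimate. For the lower estimate, all terms of the series for the derivative of order
`(0, 2 n)` at the centre have the same sign, and the term `k = 2 n` suffices.
-/

open Real Filter Topology
open scoped Classical
noncomputable section
def pd1 (f : ℝ × ℝ → ℝ) : ℝ × ℝ → ℝ := fun x => fderiv ℝ f x (1, 0)
def pd2 (f : ℝ × ℝ → ℝ) : ℝ × ℝ → ℝ := fun x => fderiv ℝ f x (0, 1)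
def pd (α : ℕ × ℕ) (f : ℝ × ℝ → ℝ) : ℝ × ℝ → ℝ := pd1^[α.1] (pd2^[α.2] f)
def LogConvexSeq (M : ℕ → ℝ) : Prop := Monotone (fun k => M (k + 1) / M k)
def MemDC (M : ℕ → ℝ) (f : ℝ × ℝ → ℝ) : Prop :=
  ContDiff ℝ (⊤ : ℕ∞) f ∧
  ∀ K : Set (ℝ × ℝ), IsCompact K →
    ∃ A > (0:ℝ), ∃ B > (0:ℝ), ∀ x ∈ K, ∀ α : ℕ × ℕ,
      |pd α f x| ≤ A * B ^ (α.1 + α.2) * (Nat.factorial α.1 * Nat.factorial α.2) * M (α.1 + α.2)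
def blowup : ℝ × ℝ → ℝ × ℝ := fun p => (p.1 * Real.cos p.2, p.1 * Real.sin p.2)
def ostrowski (M : ℕ → ℝ) (r : ℝ) : ℝ := ⨆ n : ℕ, r ^ (n + 2) / M n
def baseH (M : ℕ → ℝ) (x : ℝ × ℝ) : ℝ :=
  ∑' k : ℕ,
    (M (k + 2) / M (k + 1)) ^ 2 / (2 ^ (k + 1) * ostrowski M (M (k + 2) / M (k + 1))) *
      (1 / (x.1 ^ 2 + (M (k + 2) / M (k + 1) * x.2) ^ 2 + 1))
def blockF (M : ℕ → ℝ) (q ρ : ℝ) (x : ℝ × ℝ) : ℝ := baseH M (x.1 / ρ - q, x.2 / ρ)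
def rhoSeq (M : ℕ → ℝ) (n : ℕ) : ℝ := M n / M (n + 1)
def FGamma (M : ℕ → ℝ) (E : ℝ → ℝ) (Λ : Set ℕ) (x : ℝ × ℝ) : ℝ :=
  ∑' l : ℕ, Set.indicator Λ
    (fun l => blockF M (E (rhoSeq M l) / rhoSeq M l) (rhoSeq M l) x /
      (ostrowski M (rhoSeq M l)⁻¹ * 2 ^ l)) l

/-! ### Calculus of the partial derivatives `pd` -/

lemma contDiff_pd1 {f : ℝ × ℝ → ℝ} (hf : ContDiff ℝ (⊤ : ℕ∞) f) :
    ContDiff ℝ (⊤ : ℕ∞) (pd1 f) :=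
  (hf.fderiv_right (m := (⊤ : ℕ∞)) (by simp)).clm_apply contDiff_const

lemma contDiff_pd2 {f : ℝ × ℝ → ℝ} (hf : ContDiff ℝ (⊤ : ℕ∞) f) :
    ContDiff ℝ (⊤ : ℕ∞) (pd2 f) :=
  (hf.fderiv_right (m := (⊤ : ℕ∞)) (by simp)).clm_apply contDiff_const

lemma pd_succ_left (i j : ℕ) (f : ℝ × ℝ → ℝ) : pd (i + 1, j) f = pd1 (pd (i, j) f) := by
  simp only [pd, Function.iterate_succ_apply']

lemma pd_zero_succ (j : ℕ) (f : ℝ × ℝ → ℝ) : pd (0, j + 1) f = pd2 (pd (0, j) f) := by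
  simp only [pd, Function.iterate_succ_apply', Function.iterate_zero, id_eq]

lemma contDiff_pd {f : ℝ × ℝ → ℝ} (hf : ContDiff ℝ (⊤ : ℕ∞) f) (i j : ℕ) :
    ContDiff ℝ (⊤ : ℕ∞) (pd (i, j) f) := by
  induction i with
  | succ i ih => rw [pd_succ_left]; exact contDiff_pd1 ih
  | zero =>
    induction j with
    | zero => exact hf
    | succ j ih => rw [pd_zero_succ]; exact contDiff_pd2 ih

lemma pd1_pd2_comm {f : ℝ × ℝ → ℝ} (hf : ContDiff ℝ (⊤ : ℕ∞) f) :
    pd2 (pd1 f) = pd1 (pd2 f) := by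
  have hd : Differentiable ℝ (fderiv ℝ f) :=
    (hf.fderiv_right (m := (⊤ : ℕ∞)) (by simp)).differentiable (by simp)
  have key : ∀ (x v w : ℝ × ℝ),
      fderiv ℝ (fun y => fderiv ℝ f y v) x w = fderiv ℝ (fderiv ℝ f) x w v := by
    intro x v w
    rw [fderiv_clm_apply (hd x) (differentiableAt_const v)]
    simp
  funext x
  have hs : IsSymmSndFDerivAt ℝ f x := by
    apply ContDiffAt.isSymmSndFDerivAt hf.contDiffAt
    rw [minSmoothness_of_isRCLikeNormedField]
    exact WithTop.coe_le_coe.2 le_top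
  change fderiv ℝ (fun y => fderiv ℝ f y (1, 0)) x (0, 1)
    = fderiv ℝ (fun y => fderiv ℝ f y (0, 1)) x (1, 0)
  rw [key, key]
  exact hs _ _

lemma pd_pd2 (i j : ℕ) (f : ℝ × ℝ → ℝ) : pd (i, j) (pd2 f) = pd (i, j + 1) f := by
  simp only [pd, Function.iterate_succ_apply]

/-- Unlike `pd_pd2`, this uses the symmetry of second derivatives: `pd` applies the
`x₂`-derivatives first. -/
lemma pd_pd1 {f : ℝ × ℝ → ℝ} (hf : ContDiff ℝ (⊤ : ℕ∞) f) (i j : ℕ) :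
    pd (i, j) (pd1 f) = pd (i + 1, j) f := by
  have h : ∀ j, pd (0, j) (pd1 f) = pd1 (pd (0, j) f) := by
    intro j
    induction j with
    | zero => rfl
    | succ j ih => rw [pd_zero_succ, ih, pd1_pd2_comm (contDiff_pd hf 0 j), pd_zero_succ]
  have h' := h j
  simp only [pd, Function.iterate_zero, id_eq] at h'
  simp only [pd, Function.iterate_succ_apply, h']

lemma hasDerivAt_pd1 {f : ℝ × ℝ → ℝ} (hf : ContDiff ℝ (⊤ : ℕ∞) f) (t y : ℝ) :
    HasDerivAt (fun t => f (t, y)) (pd1 f (t, y)) t :=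
  ((hf.differentiable (by simp) (t, y)).hasFDerivAt).comp_hasDerivAt t
    ((hasDerivAt_id t).prodMk (hasDerivAt_const t y))

lemma hasDerivAt_pd2 {f : ℝ × ℝ → ℝ} (hf : ContDiff ℝ (⊤ : ℕ∞) f) (t y : ℝ) :
    HasDerivAt (fun y => f (t, y)) (pd2 f (t, y)) y :=
  ((hf.differentiable (by simp) (t, y)).hasFDerivAt).comp_hasDerivAt y
    ((hasDerivAt_const y t).prodMk (hasDerivAt_id y))

/-! ### Termwise differentiation of series -/

/-- The series `∑ F k` may be differentiated termwise to any order: each term is smooth and each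
partial derivative is dominated, uniformly on the plane, by a summable sequence. -/
def TermwiseSmooth (F : ℕ → ℝ × ℝ → ℝ) : Prop :=
  (∀ k, ContDiff ℝ (⊤ : ℕ∞) (F k)) ∧
    ∀ i j : ℕ, ∃ u : ℕ → ℝ, Summable u ∧ ∀ k x, |pd (i, j) (F k) x| ≤ u k

lemma TermwiseSmooth.map_pd1 {F : ℕ → ℝ × ℝ → ℝ} (hF : TermwiseSmooth F) :
    TermwiseSmooth (fun k => pd1 (F k)) := by
  refine ⟨fun k => contDiff_pd1 (hF.1 k), fun i j => ?_⟩
  obtain ⟨u, hu, h⟩ := hF.2 (i + 1) j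
  exact ⟨u, hu, fun k x => by rw [pd_pd1 (hF.1 k)]; exact h k x⟩

lemma TermwiseSmooth.map_pd2 {F : ℕ → ℝ × ℝ → ℝ} (hF : TermwiseSmooth F) :
    TermwiseSmooth (fun k => pd2 (F k)) := by
  refine ⟨fun k => contDiff_pd2 (hF.1 k), fun i j => ?_⟩
  obtain ⟨u, hu, h⟩ := hF.2 i (j + 1)
  exact ⟨u, hu, fun k x => by rw [pd_pd2]; exact h k x⟩

lemma TermwiseSmooth.summable {F : ℕ → ℝ × ℝ → ℝ} (hF : TermwiseSmooth F) (x : ℝ × ℝ) :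
    Summable (fun k => F k x) := by
  obtain ⟨u, hu, h⟩ := hF.2 0 0
  exact Summable.of_norm_bounded hu (fun k => h k x)

lemma clm_eq_fst_snd (L : ℝ × ℝ →L[ℝ] ℝ) :
    L = L (1, 0) • ContinuousLinearMap.fst ℝ ℝ ℝ + L (0, 1) • ContinuousLinearMap.snd ℝ ℝ ℝ := by
  ext <;> simp

lemma TermwiseSmooth.hasFDerivAt {F : ℕ → ℝ × ℝ → ℝ} (hF : TermwiseSmooth F) (x : ℝ × ℝ) :
    HasFDerivAt (fun y => ∑' k, F k y)
      ((∑' k, pd1 (F k) x) • ContinuousLinearMap.fst ℝ ℝ ℝ +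
        (∑' k, pd2 (F k) x) • ContinuousLinearMap.snd ℝ ℝ ℝ) x := by
  obtain ⟨u, hu, hu'⟩ := hF.2 1 0
  obtain ⟨v, hv, hv'⟩ := hF.2 0 1
  have hb : ∀ k y, ‖fderiv ℝ (F k) y‖ ≤ u k + v k := by
    intro k y
    rw [clm_eq_fst_snd (fderiv ℝ (F k) y)]
    refine (norm_add_le _ _).trans (add_le_add ?_ ?_)
    · rw [norm_smul]
      exact (mul_le_of_le_one_right (norm_nonneg _) (ContinuousLinearMap.norm_fst_le ..)).trans
        (hu' k y)
    · rw [norm_smul]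
      exact (mul_le_of_le_one_right (norm_nonneg _) (ContinuousLinearMap.norm_snd_le ..)).trans
        (hv' k y)
  have h := hasFDerivAt_tsum (hu.add hv)
    (fun k y => ((hF.1 k).differentiable (by simp) y).hasFDerivAt) hb (hF.summable 0) x
  have hs : Summable (fun k => fderiv ℝ (F k) x) :=
    Summable.of_norm_bounded (hu.add hv) (fun k => hb k x)
  have e : ∀ w, (∑' k, fderiv ℝ (F k) x) w = ∑' k, fderiv ℝ (F k) x w := fun w =>
    (ContinuousLinearMap.apply ℝ ℝ w).map_tsum hs
  rw [clm_eq_fst_snd (∑' k, fderiv ℝ (F k) x), e, e] at h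
  exact h

lemma TermwiseSmooth.pd1_tsum {F : ℕ → ℝ × ℝ → ℝ} (hF : TermwiseSmooth F) :
    pd1 (fun y => ∑' k, F k y) = fun y => ∑' k, pd1 (F k) y := by
  funext x
  rw [pd1, (hF.hasFDerivAt x).fderiv]
  simp

lemma TermwiseSmooth.pd2_tsum {F : ℕ → ℝ × ℝ → ℝ} (hF : TermwiseSmooth F) :
    pd2 (fun y => ∑' k, F k y) = fun y => ∑' k, pd2 (F k) y := by
  funext x
  rw [pd2, (hF.hasFDerivAt x).fderiv]
  simp

lemma TermwiseSmooth.contDiff {F : ℕ → ℝ × ℝ → ℝ} (hF : TermwiseSmooth F) :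
    ContDiff ℝ (⊤ : ℕ∞) (fun y => ∑' k, F k y) := by
  rw [contDiff_infty]
  intro n
  induction n generalizing F with
  | zero =>
    exact contDiff_zero.2 (continuous_iff_continuousAt.2 fun x => (hF.hasFDerivAt x).continuousAt)
  | succ n ih =>
    have hfd : fderiv ℝ (fun y => ∑' k, F k y) = fun x =>
        (∑' k, pd1 (F k) x) • ContinuousLinearMap.fst ℝ ℝ ℝ +
          (∑' k, pd2 (F k) x) • ContinuousLinearMap.snd ℝ ℝ ℝ :=
      funext fun x => (hF.hasFDerivAt x).fderiv
    have : ((n + 1 : ℕ) : WithTop ℕ∞) = (n : WithTop ℕ∞) + 1 := by push_cast; rfl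
    rw [this, contDiff_succ_iff_fderiv]
    refine ⟨fun x => (hF.hasFDerivAt x).differentiableAt, by simp, ?_⟩
    rw [hfd]
    exact ((ih hF.map_pd1).smul contDiff_const).add ((ih hF.map_pd2).smul contDiff_const)

lemma TermwiseSmooth.pd_tsum {F : ℕ → ℝ × ℝ → ℝ} (hF : TermwiseSmooth F) (i j : ℕ) :
    pd (i, j) (fun y => ∑' k, F k y) = fun y => ∑' k, pd (i, j) (F k) y := by
  induction j generalizing F with
  | succ j ih =>
    rw [← pd_pd2, hF.pd2_tsum, ih hF.map_pd2]
    simp only [pd_pd2]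
  | zero =>
    induction i generalizing F with
    | zero => rfl
    | succ i ih =>
      rw [← pd_pd1 hF.contDiff, hF.pd1_tsum, ih hF.map_pd1]
      simp only [pd_pd1 (hF.1 _)]

/-! ### The kernel `1 / (1 + (a x₁ - q)² + (b x₂)²)` -/

/-- The quadratic polynomial `1 + (a x₁ - q)² + (b x₂)²`. -/
def quad (a q b : ℝ) (x : ℝ × ℝ) : ℝ := 1 + (a * x.1 - q) ^ 2 + (b * x.2) ^ 2

/-- The scaled and translated kernel `c / (1 + (a x₁ - q)² + (b x₂)²)`. -/
def kern (c a q b : ℝ) (x : ℝ × ℝ) : ℝ := c / quad a q b x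

lemma quad_pos (a q b : ℝ) (x : ℝ × ℝ) : 0 < quad a q b x := by
  unfold quad; positivity

lemma contDiff_kern (c a q b : ℝ) : ContDiff ℝ (⊤ : ℕ∞) (kern c a q b) := by
  apply ContDiff.div contDiff_const
  · unfold quad; fun_prop
  · exact fun x => (quad_pos a q b x).ne'

/-- Leibniz' rule of order `(i, j)` for the constant product `quad * kern = c`. For `i < 2` or
`j < 2` the truncated subtractions are harmless since the coefficient in front vanishes. -/
lemma kern_leibniz (c a q b : ℝ) (i j : ℕ) (x : ℝ × ℝ) :
    quad a q b x * pd (i, j) (kern c a q b) x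
      + 2 * i * a * (a * x.1 - q) * pd (i - 1, j) (kern c a q b) x
      + i * (i - 1) * a ^ 2 * pd (i - 2, j) (kern c a q b) x
      + 2 * j * b * (b * x.2) * pd (i, j - 1) (kern c a q b) x
      + j * (j - 1) * b ^ 2 * pd (i, j - 2) (kern c a q b) x
      = if i = 0 ∧ j = 0 then c else 0 := by
  have hk := contDiff_kern c a q b
  have d1 : ∀ i j t y, HasDerivAt (fun t => pd (i, j) (kern c a q b) (t, y))
      (pd (i + 1, j) (kern c a q b) (t, y)) t := fun i j t y => by
    rw [pd_succ_left]; exact hasDerivAt_pd1 (contDiff_pd hk i j) t y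
  have d2 : ∀ j t y, HasDerivAt (fun y => pd (0, j) (kern c a q b) (t, y))
      (pd (0, j + 1) (kern c a q b) (t, y)) y := fun j t y => by
    rw [pd_zero_succ]; exact hasDerivAt_pd2 (contDiff_pd hk 0 j) t y
  generalize hD : (fun i j => pd (i, j) (kern c a q b)) = D
  have hD' : ∀ i j, pd (i, j) (kern c a q b) = D i j := fun i j => by rw [← hD]
  simp only [hD'] at d1 d2 ⊢
  obtain ⟨x1, x2⟩ := x
  have q1 : ∀ t y, HasDerivAt (fun t => quad a q b (t, y)) (2 * a * (a * t - q)) t := by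
    intro t y
    have := ((((((hasDerivAt_id t).const_mul a).sub_const q).pow 2).const_add 1).add_const
      ((b * y) ^ 2))
    refine this.congr_deriv ?_
    simp; ring
  have q2 : ∀ t y, HasDerivAt (fun y => quad a q b (t, y)) (2 * b * (b * y)) y := by
    intro t y
    have := ((((hasDerivAt_id y).const_mul b).pow 2).const_add (1 + (a * t - q) ^ 2))
    refine this.congr_deriv ?_
    simp; ring
  have l1 : ∀ t, HasDerivAt (fun t => a * t - q) a t := fun t => by
    simpa using ((hasDerivAt_id t).const_mul a).sub_const q
  have l2 : ∀ t, HasDerivAt (fun t => b * t) b t := fun t => by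
    simpa using ((hasDerivAt_id t).const_mul b)
  induction i generalizing x1 with
  | zero =>
    induction j generalizing x2 with
    | zero =>
      have : D 0 0 = kern c a q b := (hD' 0 0).symm
      simp [this, kern, mul_div_cancel₀ _ (quad_pos a q b (x1, x2)).ne']
    | succ j ih =>
      -- differentiate the identity of order `(0, j)` in `x₂`
      have h1 := ((((q2 x1 x2).mul (d2 j x1 x2)).add
        ((((l2 x2).const_mul (2 * j * b)).mul (d2 (j - 1) x1 x2)))).add
        ((d2 (j - 2) x1 x2).const_mul (j * (j - 1) * b ^ 2)))
      have h2 := h1.unique ((hasDerivAt_const x2 (if (0:ℕ) = 0 ∧ j = 0 then c else 0)).congr_of_eventuallyEq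
        (Eventually.of_forall fun y => by
          have := ih y
          simp only [Pi.add_apply, Pi.mul_apply]
          simpa using this))
      rcases j with _ | _ | j
      · simp at h2 ⊢; linarith
      · simp at h2 ⊢; linarith
      · simp at h2 ⊢; rw [← h2]; ring
  | succ i ih =>
    -- differentiate the identity of order `(i, j)` in `x₁`
    have h1 := ((((((q1 x1 x2).mul (d1 i j x1 x2)).add
        ((((l1 x1).const_mul (2 * i * a)).mul (d1 (i - 1) j x1 x2)))).add
        ((d1 (i - 2) j x1 x2).const_mul (i * (i - 1) * a ^ 2))).add
        ((d1 i (j - 1) x1 x2).const_mul (2 * j * b * (b * x2)))).add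
        ((d1 i (j - 2) x1 x2).const_mul (j * (j - 1) * b ^ 2)))
    have h2 := h1.unique ((hasDerivAt_const x1 (if i = 0 ∧ j = 0 then c else 0)).congr_of_eventuallyEq
        (Eventually.of_forall fun t => by
          have := ih t
          simp only [Pi.add_apply, Pi.mul_apply]
          simpa using this))
    rcases i with _ | _ | i
    · simp at h2 ⊢; linarith
    · simp at h2 ⊢; linarith
    · simp at h2 ⊢; rw [← h2]; ring

/-- Writing `s = √quad`, Leibniz' rule bounds `s ^ (i + j + 2) * |∂^(i,j) kern|` by the quantities of
lower order; since `|a x₁ - q|, |b x₂| ≤ s`, the claimed bound is inherited because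
`2/8 + 2/8 + 1/64 + 1/64 ≤ 1`. -/
lemma kern_bound {c a b : ℝ} (hc : 0 ≤ c) (ha : 0 ≤ a) (hb : 0 ≤ b) (q : ℝ) (i j : ℕ)
    (x : ℝ × ℝ) :
    √(quad a q b x) ^ (i + j + 2) * |pd (i, j) (kern c a q b) x| ≤
      c * 8 ^ (i + j) * i.factorial * j.factorial * a ^ i * b ^ j := by
  have hL := fun i j => kern_leibniz c a q b i j x
  generalize hD : (fun i j => pd (i, j) (kern c a q b) x) = D
  have hD' : ∀ i j, pd (i, j) (kern c a q b) x = D i j := fun i j => by rw [← hD]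
  simp only [hD'] at hL ⊢
  have hQ := quad_pos a q b x
  set s := √(quad a q b x) with hs
  have hs0 : 0 < s := Real.sqrt_pos.2 hQ
  have hsq : quad a q b x = s ^ 2 := (Real.sq_sqrt hQ.le).symm
  have y1 : |a * x.1 - q| ≤ s := Real.abs_le_sqrt (by unfold quad; nlinarith [sq_nonneg (b * x.2)])
  have y2 : |b * x.2| ≤ s :=
    Real.abs_le_sqrt (by unfold quad; nlinarith [sq_nonneg (a * x.1 - q)])
  generalize a * x.1 - q = z1 at *
  generalize b * x.2 = z2 at *
  rw [hsq] at hL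
  clear_value s
  generalize hB : (fun i j : ℕ =>
    c * 8 ^ (i + j) * (i.factorial : ℝ) * (j.factorial : ℝ) * a ^ i * b ^ j) = B
  have hB' : ∀ i j : ℕ,
      c * 8 ^ (i + j) * (i.factorial : ℝ) * (j.factorial : ℝ) * a ^ i * b ^ j = B i j :=
    fun i j => by rw [← hB]
  rw [hB']
  have hB0 : ∀ i j, 0 ≤ B i j := fun i j => by rw [← hB']; positivity
  have B1 : ∀ i j, B (i + 1) j = 8 * (i + 1) * a * B i j := fun i j => by
    simp only [← hB', Nat.factorial_succ]; push_cast; ring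
  have B2 : ∀ i j, B i (j + 1) = 8 * (j + 1) * b * B i j := fun i j => by
    simp only [← hB', Nat.factorial_succ]; push_cast; ring
  induction hn : i + j using Nat.strong_induction_on generalizing i j with
  | _ n ih =>
  subst hn
  have IH : ∀ i' j', i' + j' < i + j → s ^ (i' + j' + 2) * |D i' j'| ≤ B i' j' :=
    fun i' j' h => ih _ h i' j' rfl
  have t1 : s ^ (i + j) * |2 * i * a * z1 * D (i - 1) j| ≤ B i j / 4 := by
    rcases i with _ | i
    · simp; linarith [hB0 0 j]
    · have h := IH i j (by omega)
      have hc' : (0:ℝ) ≤ 2 * (i + 1) * a := by positivity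
      rw [B1]
      simp only [abs_mul, abs_of_nonneg ha, Nat.add_sub_cancel]
      rw [abs_of_nonneg (by norm_num : (0:ℝ) ≤ 2), abs_of_nonneg (by positivity)]
      push_cast
      calc _ ≤ s ^ (i + 1 + j) * (2 * (i + 1) * a * s * |D i j|) := by gcongr
        _ = 2 * (i + 1) * a * (s ^ (i + j + 2) * |D i j|) := by ring
        _ ≤ 2 * (i + 1) * a * B i j := by gcongr
        _ = _ := by ring
  have t2 : s ^ (i + j) * |2 * j * b * z2 * D i (j - 1)| ≤ B i j / 4 := by
    rcases j with _ | j
    · simp; linarith [hB0 i 0]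
    · have h := IH i j (by omega)
      have hc' : (0:ℝ) ≤ 2 * (j + 1) * b := by positivity
      rw [B2]
      simp only [abs_mul, abs_of_nonneg hb, Nat.add_sub_cancel]
      rw [abs_of_nonneg (by norm_num : (0:ℝ) ≤ 2), abs_of_nonneg (by positivity)]
      push_cast
      calc _ ≤ s ^ (i + (j + 1)) * (2 * (j + 1) * b * s * |D i j|) := by gcongr
        _ = 2 * (j + 1) * b * (s ^ (i + j + 2) * |D i j|) := by ring
        _ ≤ 2 * (j + 1) * b * B i j := by gcongr
        _ = _ := by ring
  have t3 : s ^ (i + j) * |i * (i - 1) * a ^ 2 * D (i - 2) j| ≤ B i j / 64 := by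
    rcases i with _ | _ | i
    · simp; linarith [hB0 0 j]
    · simp; linarith [hB0 1 j]
    · have h := IH i j (by omega)
      have hc' : (0:ℝ) ≤ (i + 2) * (i + 1) * a ^ 2 := by positivity
      have e : ((i + 1 + 1 : ℕ) : ℝ) * ((i + 1 + 1 : ℕ) - 1) * a ^ 2
          = (i + 2) * (i + 1) * a ^ 2 := by push_cast; ring
      rw [B1, B1, e, abs_mul, abs_of_nonneg hc', Nat.add_sub_cancel (n := i) (m := 2)]
      push_cast
      calc _ = (i + 2) * (i + 1) * a ^ 2 * (s ^ (i + j + 2) * |D i j|) := by ring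
        _ ≤ (i + 2) * (i + 1) * a ^ 2 * B i j := by gcongr
        _ = _ := by ring
  have t4 : s ^ (i + j) * |j * (j - 1) * b ^ 2 * D i (j - 2)| ≤ B i j / 64 := by
    rcases j with _ | _ | j
    · simp; linarith [hB0 i 0]
    · simp; linarith [hB0 i 1]
    · have h := IH i j (by omega)
      have hc' : (0:ℝ) ≤ (j + 2) * (j + 1) * b ^ 2 := by positivity
      have e : ((j + 1 + 1 : ℕ) : ℝ) * ((j + 1 + 1 : ℕ) - 1) * b ^ 2
          = (j + 2) * (j + 1) * b ^ 2 := by push_cast; ring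
      rw [B2, B2, e, abs_mul, abs_of_nonneg hc', Nat.add_sub_cancel (n := j) (m := 2)]
      push_cast
      calc _ = (j + 2) * (j + 1) * b ^ 2 * (s ^ (i + j + 2) * |D i j|) := by ring
        _ ≤ (j + 2) * (j + 1) * b ^ 2 * B i j := by gcongr
        _ = _ := by ring
  by_cases h0 : i = 0 ∧ j = 0
  · obtain ⟨rfl, rfl⟩ := h0
    have h := hL 0 0
    simp at h
    have h' : s ^ 2 * |D 0 0| = c := by
      rw [← abs_of_nonneg (sq_nonneg s), ← abs_mul, h, abs_of_nonneg hc]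
    simp [← hB', h']
  · have h := hL i j
    rw [if_neg h0] at h
    have e : s ^ (i + j + 2) * |D i j| = s ^ (i + j) * |s ^ 2 * D i j| := by
      rw [abs_mul, abs_of_nonneg (sq_nonneg s)]; ring
    have hle : |s ^ 2 * D i j| ≤ |2 * i * a * z1 * D (i - 1) j|
        + |i * (i - 1) * a ^ 2 * D (i - 2) j| + |2 * j * b * z2 * D i (j - 1)|
        + |j * (j - 1) * b ^ 2 * D i (j - 2)| := by
      have : s ^ 2 * D i j = -(2 * i * a * z1 * D (i - 1) j
        + i * (i - 1) * a ^ 2 * D (i - 2) j + 2 * j * b * z2 * D i (j - 1)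
        + j * (j - 1) * b ^ 2 * D i (j - 2)) := by linarith
      rw [this, abs_neg]
      refine (abs_add_le _ _).trans (add_le_add_left ?_ _)
      refine (abs_add_le _ _).trans (add_le_add_left ?_ _)
      exact abs_add_le _ _
    have := mul_le_mul_of_nonneg_left hle (pow_nonneg hs0.le (i + j))
    rw [e]
    linarith [hB0 i j]

lemma kern_deriv_center (c q b : ℝ) {ρ : ℝ} (hρ : ρ ≠ 0) (n : ℕ) :
    pd (0, 2 * n) (kern c ρ⁻¹ q b) (q * ρ, 0) = (-1) ^ n * (c * (2 * n).factorial * b ^ (2 * n)) := by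
  have hz : ρ⁻¹ * (q * ρ) - q = 0 := by field_simp; ring
  have hq : quad ρ⁻¹ q b (q * ρ, 0) = 1 := by simp [quad, hz]
  induction n with
  | zero => simp [pd, kern, hq]
  | succ n ih =>
    have h := kern_leibniz c ρ⁻¹ q b 0 (2 * n + 2) (q * ρ, 0)
    rw [hq] at h
    simp [ih] at h
    rw [show 2 * (n + 1) = 2 * n + 2 by ring, Nat.factorial_succ, Nat.factorial_succ]
    push_cast
    linear_combination h

/-! ### The weights -/

/-- Log-convexity makes `j ↦ r ^ j / M j` with `r = M (k + 1) / M k` maximal at `j = k`. -/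
lemma ratio_pow_le {M : ℕ → ℝ} (hMpos : ∀ k, 0 < M k) (hMlc : LogConvexSeq M) (k j : ℕ) :
    M k * (M (k + 1) / M k) ^ j ≤ M j * (M (k + 1) / M k) ^ k := by
  set m := M (k + 1) / M k with hm
  have hm0 : 0 < m := div_pos (hMpos _) (hMpos _)
  rcases le_total k j with h | h
  · obtain ⟨d, rfl⟩ := Nat.exists_eq_add_of_le h
    have key : M k * m ^ d ≤ M (k + d) := by
      induction d with
      | zero => simp
      | succ d ih =>
        have h1 : m ≤ M (k + d + 1) / M (k + d) := hMlc (Nat.le_add_right k d)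
        rw [le_div_iff₀ (hMpos _)] at h1
        calc M k * m ^ (d + 1) = m * (M k * m ^ d) := by ring
          _ ≤ m * M (k + d) := by gcongr; exact ih (by omega)
          _ ≤ _ := h1
    calc M k * m ^ (k + d) = (M k * m ^ d) * m ^ k := by ring
      _ ≤ _ := by gcongr
  · obtain ⟨d, hd⟩ := Nat.exists_eq_add_of_le h
    have key : ∀ e ≤ d, M (j + e) ≤ M j * m ^ e := by
      intro e
      induction e with
      | zero => simp
      | succ e ih =>
        intro he
        have h1 : M (j + e + 1) / M (j + e) ≤ m := hMlc (show j + e ≤ k by omega)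
        rw [div_le_iff₀ (hMpos _)] at h1
        calc M (j + (e + 1)) ≤ m * M (j + e) := h1
          _ ≤ m * (M j * m ^ e) := by gcongr; exact ih (by omega)
          _ = _ := by ring
    have h2 := key d le_rfl
    rw [← hd] at h2
    calc M k * m ^ j ≤ (M j * m ^ d) * m ^ j := by gcongr
      _ = M j * m ^ k := by rw [mul_assoc, ← pow_add, add_comm d j, ← hd]

/-- The `k`-th term of the building block: with `m = M (k + 1) / M k`, the weight
`M k / (2 m) ^ k` equals `m² / (2 ^ k φ(m))`, where `φ` is the Ostrowski function
`ostrowski M`. -/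
def blockTerm (M : ℕ → ℝ) (q ρ : ℝ) (k : ℕ) : ℝ × ℝ → ℝ :=
  kern (M k / (2 * (M (k + 1) / M k)) ^ k) ρ⁻¹ q (M (k + 1) / M k * ρ⁻¹)

/-- The factor `m ^ j` produced by the `x₂`-derivatives is absorbed by the weight
(`ratio_pow_le`), which leaves `M j / 2 ^ k`. -/
lemma blockTerm_bound {M : ℕ → ℝ} (hMpos : ∀ k, 0 < M k) (hMmono : Monotone M)
    (hMlc : LogConvexSeq M) {ρ : ℝ} (q : ℝ) (hρ0 : 0 < ρ) (k i j : ℕ) (x : ℝ × ℝ) :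
    |pd (i, j) (blockTerm M q ρ k) x| ≤
      ρ ^ 2 * 8 ^ (i + j) * (i.factorial * j.factorial) * M j /
        √((x.1 - q * ρ) ^ 2 + x.2 ^ 2 + ρ ^ 2) ^ (i + j + 2) * (1 / 2) ^ k := by
  have hr := ratio_pow_le hMpos hMlc k j
  have hMk := hMpos k
  have hm1 : 1 ≤ M (k + 1) / M k := (one_le_div hMk).2 (hMmono (Nat.le_succ k))
  unfold blockTerm
  set m := M (k + 1) / M k with hm
  have hm0 : 0 < m := by linarith
  have hb := kern_bound (c := M k / (2 * m) ^ k) (a := ρ⁻¹) (b := m * ρ⁻¹) (by positivity)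
    (by positivity) (by positivity) q i j x
  set T := (x.1 - q * ρ) ^ 2 + x.2 ^ 2 + ρ ^ 2 with hT
  have hT0 : 0 < T := by positivity
  have hsT : 0 < √T := Real.sqrt_pos.2 hT0
  have hTQ : √T ≤ ρ * √(quad ρ⁻¹ q (m * ρ⁻¹) x) := by
    rw [Real.sqrt_le_left (by positivity), mul_pow, Real.sq_sqrt (quad_pos _ _ _ _).le]
    have e : ρ ^ 2 * quad ρ⁻¹ q (m * ρ⁻¹) x = (x.1 - q * ρ) ^ 2 + m ^ 2 * x.2 ^ 2 + ρ ^ 2 := by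
      unfold quad; field_simp; ring
    rw [e, hT]
    nlinarith [mul_nonneg (sub_nonneg.2 (one_le_pow₀ hm1 : (1:ℝ) ≤ m ^ 2)) (sq_nonneg x.2)]
  have hX := abs_nonneg (pd (i, j) (kern (M k / (2 * m) ^ k) ρ⁻¹ q (m * ρ⁻¹)) x)
  generalize |pd (i, j) (kern (M k / (2 * m) ^ k) ρ⁻¹ q (m * ρ⁻¹)) x| = X at *
  rw [div_mul_eq_mul_div, le_div_iff₀ (by positivity)]
  have hw : M k / (2 * m) ^ k * m ^ j ≤ M j * (1 / 2) ^ k := by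
    rw [mul_pow, div_mul_eq_mul_div, div_le_iff₀ (by positivity)]
    calc _ ≤ _ := hr
      _ = M j * m ^ k * ((1 / 2) ^ k * 2 ^ k) := by rw [← mul_pow]; norm_num
      _ = _ := by ring
  calc X * √T ^ (i + j + 2) ≤ X * (ρ * √(quad ρ⁻¹ q (m * ρ⁻¹) x)) ^ (i + j + 2) := by gcongr
    _ = ρ ^ (i + j + 2) * (√(quad ρ⁻¹ q (m * ρ⁻¹) x) ^ (i + j + 2) * X) := by ring
    _ ≤ ρ ^ (i + j + 2) * (M k / (2 * m) ^ k * 8 ^ (i + j) * i.factorial * j.factorial *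
        ρ⁻¹ ^ i * (m * ρ⁻¹) ^ j) := by gcongr
    _ = ρ ^ 2 * 8 ^ (i + j) * (i.factorial * j.factorial) *
        (M k / (2 * m) ^ k * m ^ j) * ((ρ * ρ⁻¹) ^ (i + j)) := by ring
    _ = ρ ^ 2 * 8 ^ (i + j) * (i.factorial * j.factorial) *
        (M k / (2 * m) ^ k * m ^ j) := by rw [mul_inv_cancel₀ hρ0.ne', one_pow, mul_one]
    _ ≤ ρ ^ 2 * 8 ^ (i + j) * (i.factorial * j.factorial) * (M j * (1 / 2) ^ k) := by gcongr
    _ = _ := by ring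

lemma termwiseSmooth_blockTerm {M : ℕ → ℝ} (hMpos : ∀ k, 0 < M k) (hMmono : Monotone M)
    (hMlc : LogConvexSeq M) {ρ : ℝ} (q : ℝ) (hρ0 : 0 < ρ) :
    TermwiseSmooth (blockTerm M q ρ) := by
  refine ⟨fun k => contDiff_kern _ _ _ _, fun i j => ?_⟩
  refine ⟨fun k => ρ ^ 2 * 8 ^ (i + j) * (i.factorial * j.factorial) * M j /
        ρ ^ (i + j + 2) * (1 / 2) ^ k, summable_geometric_two.mul_left _, fun k x => ?_⟩
  refine (blockTerm_bound hMpos hMmono hMlc q hρ0 k i j x).trans ?_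
  have := hMpos j
  dsimp only
  gcongr
  exact Real.le_sqrt_of_sq_le (by nlinarith [sq_nonneg (x.1 - q * ρ), sq_nonneg x.2])

/-- Remark 3.7 (a priori estimates on the building block): for `0 < ρ < 1` and `q ≥ 1`
there is `f ∈ C^∞(ℝ²)` with
(i) `|∂^α f(x)| ≤ 64 ρ² 8^{|α|+1} α! M_{α₂}/(‖x - (qρ,0)‖² + ρ²)^{1+|α|/2}` and
(ii) `|∂^{2n}f/∂x₂^{2n}(qρ,0)| ≥ (2n)! M_{2n}/(4^n ρ^{2n})`. -/
theorem exists_building_block (M : ℕ → ℝ) (hMpos : ∀ k, 0 < M k) (hMmono : Monotone M)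
    (hMlc : LogConvexSeq M) (hM0 : M 0 = 1)
    (ρ q : ℝ) (hρ0 : 0 < ρ) (hρ1 : ρ < 1) (hq : 1 ≤ q) :
    ∃ f : ℝ × ℝ → ℝ, ContDiff ℝ (⊤ : ℕ∞) f ∧
      (∀ x : ℝ × ℝ, ∀ α : ℕ × ℕ,
        |pd α f x| ≤ 64 * ρ ^ 2 * 8 ^ (α.1 + α.2 + 1) *
          (Nat.factorial α.1 * Nat.factorial α.2) * M α.2 /
          (((x.1 - q * ρ) ^ 2 + x.2 ^ 2) + ρ ^ 2) ^ (1 + ((α.1 + α.2 : ℕ) : ℝ) / 2)) ∧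
      (∀ n : ℕ, (Nat.factorial (2 * n) : ℝ) * M (2 * n) / (4 ^ n * ρ ^ (2 * n)) ≤
        |pd (0, 2 * n) f (q * ρ, 0)|) := by
  have hF := termwiseSmooth_blockTerm hMpos hMmono hMlc q hρ0
  refine ⟨fun x => ∑' k, blockTerm M q ρ k x, hF.contDiff, ?_, ?_⟩
  · rintro x ⟨i, j⟩
    rw [hF.pd_tsum]
    simp only
    set T := (x.1 - q * ρ) ^ 2 + x.2 ^ 2 + ρ ^ 2 with hT
    have hT0 : 0 < T := by positivity
    have hpow : T ^ (1 + ((i + j : ℕ) : ℝ) / 2) = √T ^ (i + j + 2) := by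
      rw [Real.sqrt_eq_rpow, ← Real.rpow_natCast, ← Real.rpow_mul hT0.le]
      congr 1
      push_cast; ring
    rw [hpow]
    have hs := hasSum_geometric_two.mul_left
      (ρ ^ 2 * 8 ^ (i + j) * (i.factorial * j.factorial) * M j / √T ^ (i + j + 2))
    have hle := tsum_of_norm_bounded (f := fun k => pd (i, j) (blockTerm M q ρ k) x) hs
      (fun k => blockTerm_bound hMpos hMmono hMlc q hρ0 k i j x)
    refine (show |_| ≤ _ from hle).trans ?_
    rw [div_mul_eq_mul_div]
    have hMj := hMpos j
    refine div_le_div_of_nonneg_right ?_ (by positivity)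
    have hA : 0 ≤ ρ ^ 2 * 8 ^ (i + j) * (i.factorial * j.factorial) * M j := by positivity
    rw [pow_succ (8:ℝ) (i + j)]
    nlinarith
  · intro n
    rw [hF.pd_tsum]
    obtain ⟨u, hu, hu'⟩ := hF.2 0 (2 * n)
    have hs : Summable fun k => pd (0, 2 * n) (blockTerm M q ρ k) (q * ρ, 0) :=
      Summable.of_norm_bounded hu (fun k => hu' k _)
    have e : ∀ k, pd (0, 2 * n) (blockTerm M q ρ k) (q * ρ, 0) = (-1) ^ n *
        (M k / (2 * (M (k + 1) / M k)) ^ k * (2 * n).factorial *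
          (M (k + 1) / M k * ρ⁻¹) ^ (2 * n)) :=
      fun k => kern_deriv_center _ q _ hρ0.ne' n
    simp only [e] at hs ⊢
    have hs' := (summable_mul_left_iff (by simp : ((-1:ℝ)) ^ n ≠ 0)).1 hs
    rw [tsum_mul_left, abs_mul, abs_pow, abs_neg, abs_one, one_pow, one_mul]
    have hnn : ∀ k, 0 ≤ M k / (2 * (M (k + 1) / M k)) ^ k * (2 * n).factorial *
          (M (k + 1) / M k * ρ⁻¹) ^ (2 * n) := fun k => by
      have := hMpos k
      have := hMpos (k + 1)
      positivity
    -- all terms have the same sign, and the term `k = 2 n` alone equals the lower bound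
    refine le_trans (le_trans (le_of_eq ?_) (hs'.le_tsum (2 * n) fun k _ => hnn k)) (le_abs_self _)
    have hm : 0 < M (2 * n + 1) / M (2 * n) := div_pos (hMpos _) (hMpos _)
    generalize M (2 * n + 1) / M (2 * n) = m at *
    have h4 : (4:ℝ) ^ n = 2 ^ (2 * n) := by rw [pow_mul]; norm_num
    rw [h4, mul_pow, mul_pow, inv_pow]
    field_simp
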